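/- Let β > 0 and i ∈ ℕ. There exists a constant C, depending only on β and i, such that for all integers j ≥ 1, ℓ ≥ 1 and all t ≥ 0: Σ_{k=0}^{ℓ-1} I^{k+1}_j(t) · (j+k)^{2i+1} ≤ C · e^{Ct} · j^{2(i+1)}. -/

import Mathlib

open MeasureTheory

/-- The nested integral `∫₀^t ∫₀^{s_ℓ} ⋯ ∫₀^{s_2} e^{-β(s_2+⋯+s_ℓ)} e^{a s_1} ds_1 ⋯ ds_ℓ`,
defined recursively in the number `ℓ` of integrations. -/
noncomputable def nestInt (β a : ℝ) : ℕ → ℝ → ℝ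
  | 0, _ => 1
  | 1, t => ∫ s in (0:ℝ)..t, Real.exp (a * s)
  | (n + 2), t => ∫ s in (0:ℝ)..t, Real.exp (-β * s) * nestInt β a (n + 1) s

/-- The iterated exponential integral
`I^ℓ_j(t) = β^ℓ ((j+ℓ-1)!/(j-1)!) e^{-βjt} ∫₀^t ∫₀^{s_ℓ} ⋯ ∫₀^{s_2}
e^{-β(s_2+⋯+s_ℓ)} e^{β(j+ℓ-1)s_1} ds_1 ⋯ ds_ℓ`, with `I^0_j(t) = 1`. -/
noncomputable def Iex (β : ℝ) (j ℓ : ℕ) (t : ℝ) : ℝ :=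
  if ℓ = 0 then 1
  else β ^ ℓ * ((Nat.factorial (j + ℓ - 1) : ℝ) / (Nat.factorial (j - 1) : ℝ)) *
    Real.exp (-(β * j * t)) * nestInt β (β * ((j : ℝ) + (ℓ : ℝ) - 1)) ℓ t

/-!
For `j ≥ 1`, `Iex β j ℓ t` is the probability that a Yule process started at `j`, which
jumps from `m` to `m + 1` at rate `β m`, has made at least `ℓ` jumps by time `t`; conditioning on
the first jump gives the recursion `Iex_succ`. Summation by parts therefore turns
`∑ k, Iex β j (k + 1) t * (f (j + k + 1) - f (j + k))` into `𝔼 f (Y t) - f j`, up to truncation at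
`ℓ` jumps. As in Grönwall's inequality, this is at most `(exp (c * t) - 1) * f j` as soon as the
generator satisfies `β m (f (m + 1) - f m) ≤ c f m`. The choice `f m = m ^ (n + 1)` meets this
condition, and its increments dominate the weights `m ^ n`.
-/

section OrderedRing

variable {R : Type*} [CommRing R] [PartialOrder R] [IsOrderedRing R] {x : R}

theorem pow_le_add_one_pow_succ_sub_pow_succ (hx : 0 ≤ x) (n : ℕ) :
    x ^ n ≤ (x + 1) ^ (n + 1) - x ^ (n + 1) := by
  have hmono : x ^ n ≤ (x + 1) ^ n := pow_le_pow_left₀ hx (le_add_of_nonneg_right zero_le_one) n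
  rw [le_sub_iff_add_le]
  calc
    x ^ n + x ^ (n + 1) = (x + 1) * x ^ n := by ring
    _ ≤ (x + 1) * (x + 1) ^ n := mul_le_mul_of_nonneg_left hmono (add_nonneg hx zero_le_one)
    _ = (x + 1) ^ (n + 1) := (pow_succ' _ _).symm

theorem add_one_pow_succ_sub_pow_succ_le (hx : 1 ≤ x) (n : ℕ) :
    (x + 1) ^ (n + 1) - x ^ (n + 1) ≤ (2 ^ (n + 1) - 1) * x ^ n := by
  have hx₀ : 0 ≤ x := zero_le_one.trans hx
  induction n with
  | zero => norm_num
  | succ n ih => calc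
      (x + 1) ^ (n + 2) - x ^ (n + 2)
        = (x + 1) * ((x + 1) ^ (n + 1) - x ^ (n + 1)) + x ^ (n + 1) := by ring
      _ ≤ (x + x) * ((2 ^ (n + 1) - 1) * x ^ n) + x ^ (n + 1) := by
        gcongr
        exact (pow_nonneg hx₀ n).trans (pow_le_add_one_pow_succ_sub_pow_succ hx₀ n)
      _ = (2 ^ (n + 2) - 1) * x ^ (n + 1) := by ring

end OrderedRing

theorem integral_mul_exp_mul (a t : ℝ) :
    ∫ s in (0 : ℝ)..t, a * Real.exp (a * s) = Real.exp (a * t) - 1 := by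
  simp [intervalIntegral.mul_integral_comp_mul_left]

theorem mul_exp_neg_mul_integral_le {r c y t : ℝ} {S : ℝ → ℝ} (ht : 0 ≤ t) (hS : Continuous S)
    (hle : ∀ s ∈ Set.Icc 0 t, r * S s ≤ ((r + c) * Real.exp (c * s) - r) * y) :
    r * Real.exp (-(r * t)) * ∫ s in (0 : ℝ)..t, Real.exp (r * s) * S s ≤
      (Real.exp (c * t) - 1) * y := by
  have hexp (s : ℝ) : Real.exp ((r + c) * s) = Real.exp (r * s) * Real.exp (c * s) := by
    rw [add_mul, Real.exp_add]
  have hbound : r * ∫ s in (0 : ℝ)..t, Real.exp (r * s) * S s ≤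
      (Real.exp ((r + c) * t) - Real.exp (r * t)) * y := calc
    _ = ∫ s in (0 : ℝ)..t, Real.exp (r * s) * (r * S s) := by
      simp only [mul_left_comm _ r, intervalIntegral.integral_const_mul]
    _ ≤ ∫ s in (0 : ℝ)..t,
          ((r + c) * Real.exp ((r + c) * s) - r * Real.exp (r * s)) * y := by
      refine intervalIntegral.integral_mono_on ht
        (Continuous.intervalIntegrable (by fun_prop) _ _)
        (Continuous.intervalIntegrable (by fun_prop) _ _) fun s hs => ?_
      refine (mul_le_mul_of_nonneg_left (hle s hs) (Real.exp_pos _).le).trans_eq ?_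
      rw [hexp]
      ring
    _ = (Real.exp ((r + c) * t) - Real.exp (r * t)) * y := by
      rw [intervalIntegral.integral_mul_const, intervalIntegral.integral_sub
        (Continuous.intervalIntegrable (by fun_prop) _ _)
        (Continuous.intervalIntegrable (by fun_prop) _ _),
        integral_mul_exp_mul, integral_mul_exp_mul]
      ring
  calc
    _ = Real.exp (-(r * t)) * (r * ∫ s in (0 : ℝ)..t, Real.exp (r * s) * S s) := by ring
    _ ≤ Real.exp (-(r * t)) * ((Real.exp ((r + c) * t) - Real.exp (r * t)) * y) := by gcongr
    _ = (Real.exp (c * t) - 1) * y := by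
      rw [hexp, Real.exp_neg]
      field_simp

theorem continuous_nestInt (β a : ℝ) : ∀ n, Continuous (nestInt β a n)
  | 0 => continuous_const
  | 1 => intervalIntegral.continuous_primitive
      (fun _ _ => Continuous.intervalIntegrable (by fun_prop) _ _) 0
  | n + 2 => by
    have ih := continuous_nestInt β a (n + 1)
    exact intervalIntegral.continuous_primitive
      (fun _ _ => Continuous.intervalIntegrable (by fun_prop) _ _) 0

theorem nestInt_nonneg (β a : ℝ) : ∀ (n : ℕ) {t : ℝ}, 0 ≤ t → 0 ≤ nestInt β a n t
  | 0, _, _ => zero_le_one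
  | 1, _, ht => intervalIntegral.integral_nonneg ht fun _ _ => (Real.exp_pos _).le
  | n + 2, _, ht => intervalIntegral.integral_nonneg ht fun _ hs =>
      mul_nonneg (Real.exp_pos _).le (nestInt_nonneg β a (n + 1) hs.1)

@[simp]
theorem Iex_zero (β : ℝ) (j : ℕ) (t : ℝ) : Iex β j 0 t = 1 :=
  if_pos rfl

theorem continuous_Iex (β : ℝ) (j ℓ : ℕ) : Continuous (Iex β j ℓ) := by
  have := continuous_nestInt β (β * ((j : ℝ) + ℓ - 1)) ℓ
  exact continuous_const.if_const _ (by fun_prop)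

theorem Iex_nonneg {β : ℝ} (hβ : 0 ≤ β) (j ℓ : ℕ) {t : ℝ} (ht : 0 ≤ t) : 0 ≤ Iex β j ℓ t := by
  have := nestInt_nonneg β (β * ((j : ℝ) + ℓ - 1)) ℓ ht
  unfold Iex
  positivity

theorem Iex_succ_eq_ascFactorial {j : ℕ} (hj : 0 < j) (β : ℝ) (ℓ : ℕ) (t : ℝ) :
    Iex β j (ℓ + 1) t = β ^ (ℓ + 1) * j.ascFactorial (ℓ + 1) * Real.exp (-(β * j * t)) *
      nestInt β (β * (j + ℓ)) (ℓ + 1) t := by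
  have hfact : ((j + ℓ).factorial : ℝ) / (j - 1).factorial = j.ascFactorial (ℓ + 1) := by
    rw [div_eq_iff (by positivity), mul_comm]
    exact_mod_cast (Nat.factorial_mul_ascFactorial' j (ℓ + 1) hj).symm
  simp only [Iex, ℓ.succ_ne_zero, if_false, ← add_assoc, Nat.add_sub_cancel, hfact, Nat.cast_succ,
    add_sub_cancel_right]

theorem Iex_succ {j : ℕ} (hj : 0 < j) (β : ℝ) (ℓ : ℕ) (t : ℝ) :
    Iex β j (ℓ + 1) t = β * j * Real.exp (-(β * j * t)) *
      ∫ s in (0 : ℝ)..t, Real.exp (β * j * s) * Iex β (j + 1) ℓ s := by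
  rw [Iex_succ_eq_ascFactorial hj]
  cases ℓ with
  | zero => simp [nestInt, Nat.ascFactorial_succ]
  | succ ℓ =>
    have hcoeff : (j : ℝ) * (j + 1).ascFactorial (ℓ + 1) = j.ascFactorial (ℓ + 2) := by
      exact_mod_cast Nat.succ_ascFactorial j (ℓ + 1)
    have hrate : β * ((j + 1 : ℕ) + ℓ) = β * (j + (ℓ + 1 : ℕ)) := by push_cast; ring
    have hintegrand (s : ℝ) : Real.exp (β * j * s) * Iex β (j + 1) (ℓ + 1) s =
        β ^ (ℓ + 1) * (j + 1).ascFactorial (ℓ + 1) *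
          (Real.exp (-β * s) * nestInt β (β * (j + (ℓ + 1 : ℕ))) (ℓ + 1) s) := by
      have hexp : Real.exp (-β * s) =
          Real.exp (β * j * s) * Real.exp (-(β * (j + 1 : ℕ) * s)) := by
        rw [← Real.exp_add]
        push_cast
        ring_nf
      rw [Iex_succ_eq_ascFactorial j.succ_pos, hrate, hexp]
      ring
    simp only [hintegrand, intervalIntegral.integral_const_mul, nestInt, ← hcoeff]
    ring

theorem sum_Iex_succ_mul {j : ℕ} (hj : 0 < j) (β : ℝ) (K : Finset ℕ) (w : ℕ → ℝ) (t : ℝ) :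
    ∑ k ∈ K, Iex β j (k + 1) t * w k = β * j * Real.exp (-(β * j * t)) *
      ∫ s in (0 : ℝ)..t, Real.exp (β * j * s) * ∑ k ∈ K, Iex β (j + 1) k s * w k := by
  have hint (k : ℕ) : IntervalIntegrable
      (fun s => Real.exp (β * j * s) * (Iex β (j + 1) k s * w k)) volume 0 t := by
    have := continuous_Iex β (j + 1) k
    exact Continuous.intervalIntegrable (by fun_prop) _ _
  simp only [Finset.mul_sum]
  rw [intervalIntegral.integral_finsetSum fun k _ => hint k, Finset.mul_sum]
  simp only [Iex_succ hj, ← mul_assoc, intervalIntegral.integral_mul_const]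

theorem sum_Iex_succ_mul_sub_le_of_drift_le {β c : ℝ} (hβ : 0 ≤ β) (hc : 0 ≤ c) {f : ℕ → ℝ}
    (hf : ∀ m, 0 < m → 0 ≤ f m) (hdrift : ∀ m, 0 < m → β * m * (f (m + 1) - f m) ≤ c * f m)
    (ℓ : ℕ) {j : ℕ} (hj : 0 < j) {t : ℝ} (ht : 0 ≤ t) :
    ∑ k ∈ Finset.range ℓ, Iex β j (k + 1) t * (f (j + k + 1) - f (j + k)) ≤
      (Real.exp (c * t) - 1) * f j := by
  induction ℓ generalizing j t with
  | zero =>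
    have hexp : 0 ≤ Real.exp (c * t) - 1 := sub_nonneg.2 (Real.one_le_exp (by positivity))
    simpa using mul_nonneg hexp (hf j hj)
  | succ ℓ ih =>
    have hcont : Continuous fun s => ∑ k ∈ Finset.range (ℓ + 1),
        Iex β (j + 1) k s * (f (j + k + 1) - f (j + k)) :=
      continuous_finsetSum _ fun k _ => (continuous_Iex β (j + 1) k).mul_const _
    rw [sum_Iex_succ_mul hj]
    refine mul_exp_neg_mul_integral_le ht hcont fun s hs => ?_
    have hsum : ∑ k ∈ Finset.range (ℓ + 1), Iex β (j + 1) k s * (f (j + k + 1) - f (j + k)) ≤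
        f (j + 1) * Real.exp (c * s) - f j := by
      have := ih j.succ_pos hs.1
      simp only [Finset.sum_range_succ', ← add_assoc, add_right_comm _ _ 1] at this ⊢
      simp only [Iex_zero, add_zero]
      linarith
    have hstep : β * j * f (j + 1) ≤ (β * j + c) * f j := by linarith [hdrift j hj]
    calc
      _ ≤ β * j * (f (j + 1) * Real.exp (c * s) - f j) := by gcongr
      _ = β * j * f (j + 1) * Real.exp (c * s) - β * j * f j := by ring
      _ ≤ (β * j + c) * f j * Real.exp (c * s) - β * j * f j := by gcongr
      _ = _ := by ring

theorem sum_Iex_succ_mul_pow_le {β : ℝ} (hβ : 0 ≤ β) (n ℓ : ℕ) {j : ℕ} (hj : 0 < j) {t : ℝ}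
    (ht : 0 ≤ t) :
    ∑ k ∈ Finset.range ℓ, Iex β j (k + 1) t * ((j : ℝ) + k) ^ n ≤
      (Real.exp (β * (2 ^ (n + 1) - 1) * t) - 1) * (j : ℝ) ^ (n + 1) := by
  have hc : 0 ≤ β * ((2 : ℝ) ^ (n + 1) - 1) :=
    mul_nonneg hβ (sub_nonneg.2 (one_le_pow₀ one_le_two))
  have hdrift (m : ℕ) (hm : 0 < m) : β * m * (((m + 1 : ℕ) : ℝ) ^ (n + 1) - (m : ℝ) ^ (n + 1)) ≤
      β * (2 ^ (n + 1) - 1) * (m : ℝ) ^ (n + 1) := by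
    have hm₁ : (1 : ℝ) ≤ m := by exact_mod_cast hm
    push_cast
    calc
      _ ≤ β * m * ((2 ^ (n + 1) - 1) * (m : ℝ) ^ n) := by
        gcongr
        exact add_one_pow_succ_sub_pow_succ_le hm₁ n
      _ = _ := by ring
  calc
    _ ≤ ∑ k ∈ Finset.range ℓ, Iex β j (k + 1) t *
          (((j + k + 1 : ℕ) : ℝ) ^ (n + 1) - ((j + k : ℕ) : ℝ) ^ (n + 1)) := by
      gcongr with k
      · exact Iex_nonneg hβ j (k + 1) ht
      · push_cast
        exact pow_le_add_one_pow_succ_sub_pow_succ (by positivity) n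
    _ ≤ _ := sum_Iex_succ_mul_sub_le_of_drift_le (f := fun m => (m : ℝ) ^ (n + 1)) hβ hc
      (fun _ _ => by positivity) hdrift ℓ hj ht

theorem Iex_weighted_sum_bound_general {β : ℝ} (hβ : 0 ≤ β) (n : ℕ) :
    ∃ C : ℝ, ∀ j ℓ : ℕ, 1 ≤ j → ∀ t : ℝ, 0 ≤ t →
      ∑ k ∈ Finset.range ℓ, Iex β j (k + 1) t * ((j : ℝ) + k) ^ n
        ≤ C * Real.exp (C * t) * (j : ℝ) ^ (n + 1) := by
  set c : ℝ := β * (2 ^ (n + 1) - 1)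
  have hc : 0 ≤ c := mul_nonneg hβ (sub_nonneg.2 (one_le_pow₀ one_le_two))
  refine ⟨c + 1, fun j ℓ hj t ht => (sum_Iex_succ_mul_pow_le hβ n ℓ hj ht).trans ?_⟩
  gcongr
  calc
    Real.exp (c * t) - 1 ≤ 1 * Real.exp (c * t) := by linarith
    _ ≤ (c + 1) * Real.exp ((c + 1) * t) := by gcongr <;> linarith

/-- There is a constant `C`, depending only on `β` and `i`, such that for all `j, ℓ ≥ 1`
and `t ≥ 0`: `Σ_{k=0}^{ℓ-1} I^{k+1}_j(t) (j+k)^{2i+1} ≤ C e^{Ct} j^{2(i+1)}`. -/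
theorem Iex_weighted_sum_bound (β : ℝ) (hβ : 0 < β) (i : ℕ) :
    ∃ C : ℝ, ∀ j ℓ : ℕ, 1 ≤ j → 1 ≤ ℓ → ∀ t : ℝ, 0 ≤ t →
      ∑ k ∈ Finset.range ℓ, Iex β j (k + 1) t * ((j : ℝ) + (k : ℝ)) ^ (2 * i + 1)
        ≤ C * Real.exp (C * t) * (j : ℝ) ^ (2 * (i + 1)) := by
  obtain ⟨C, hC⟩ := Iex_weighted_sum_bound_general hβ.le (2 * i + 1)
  exact ⟨C, fun j ℓ hj _ t ht => hC j ℓ hj t ht⟩
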